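/- arXiv:2411.15751 — 3 statements merged into one kernel-verified Lean document; each statement's English description precedes it below -/
import Mathlib

section
/- With S, the involution i ↦ i', and the Verlinde numbers N as in the context: for all c, j ∈ I, ∑_{a∈I} ∑_{b∈I} N b' c a · S j a · S j b = S c j / S 0 j. -/
/-!
By symmetry of `S` and `S⁻¹ i j = S i (d j)`, the factor `S (d b) t` in the Verlinde formula equals
`S⁻¹ t b`. The sums over `a` and `b` then decouple, each giving `∑ x, S⁻¹ t x * S x j = δ_{t j}`,
and only the term `t = j` survives.
-/

/-- Verlinde formula consequence: `∑_{a,b} N b' c a · S j a · S j b = S c j / S 0 j`. -/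
theorem verlinde_sum_one (p : ℕ) (S : Matrix (Fin (p + 1)) (Fin (p + 1)) ℂ)
    (hsym : ∀ i j, S i j = S j i)
    (hunit : IsUnit S)
    (h0 : ∀ t, S 0 t ≠ 0)
    (d : Fin (p + 1) → Fin (p + 1))
    (hd : ∀ i, d (d i) = i)
    (hd0 : d 0 = 0)
    (hSinv : ∀ i j, S⁻¹ i j = S i (d j))
    (N : Fin (p + 1) → Fin (p + 1) → Fin (p + 1) → ℂ)
    (hN : ∀ i j k, N i j k = ∑ t, S j t * S i t * S⁻¹ t k / S 0 t)
    (c j : Fin (p + 1)) :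
    ∑ a, ∑ b, N (d b) c a * S j a * S j b = S c j / S 0 j := by
  have hδ : ∀ t, ∑ x, S⁻¹ t x * S j x = if t = j then 1 else 0 := by
    intro t
    have h := congrFun (congrFun
      (Matrix.nonsing_inv_mul S ((Matrix.isUnit_iff_isUnit_det S).mp hunit)) t) j
    rw [Matrix.mul_apply, Matrix.one_apply] at h
    rw [← h]
    exact Finset.sum_congr rfl fun x _ => by rw [hsym j x]
  have hinv : ∀ b t, S (d b) t = S⁻¹ t b := fun b t => by rw [hSinv, hsym]
  calc ∑ a, ∑ b, N (d b) c a * S j a * S j b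
      = ∑ a, ∑ b, ∑ t, S c t / S 0 t * ((S⁻¹ t a * S j a) * (S⁻¹ t b * S j b)) := by
        refine Finset.sum_congr rfl fun a _ => Finset.sum_congr rfl fun b _ => ?_
        rw [hN, Finset.sum_mul, Finset.sum_mul]
        refine Finset.sum_congr rfl fun t _ => ?_
        rw [hinv]
        ring
    _ = ∑ t, ∑ a, ∑ b, S c t / S 0 t * ((S⁻¹ t a * S j a) * (S⁻¹ t b * S j b)) := by
        exact (Finset.sum_congr rfl fun a _ => Finset.sum_comm).trans Finset.sum_comm
    _ = ∑ t, S c t / S 0 t * ((∑ a, S⁻¹ t a * S j a) * (∑ b, S⁻¹ t b * S j b)) := by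
        simp_rw [Finset.sum_mul_sum, Finset.mul_sum]
    _ = S c j / S 0 j := by
        simp [hδ]
end

section
/- With S, the involution i ↦ i', and the Verlinde numbers N as in the context: for every n ≥ 2, every j ∈ I, and all i₁, …, iₙ ∈ I, the iterated sum ∑_{l₁,…,l_{n−1} ∈ I} N i₁ i₂ l₁ · N l₁ i₃ l₂ · ⋯ · N l_{n−2} iₙ l_{n−1} · S l_{n−1} j equals (S i₁ j · S i₂ j · ⋯ · S iₙ j) / (S 0 j)^{n−1}. -/
/-!
The Verlinde numbers are structure constants diagonalised by `S`: expanding `N a b k` and using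
`S⁻¹ * S = 1` gives `∑ k, N a b k * S k j = S a j * S b j / S 0 j` (`verlinde_sum_mul`).
Summing over the first chain variable then reduces a chain starting at `a` to a shorter chain,
so an induction on the length yields one factor `S (i t) j / S 0 j` for every link
(`verlinde_chain_aux`).
-/

/-- The column `S · j` is an eigenvector of the fusion matrix `N a · ·`, with eigenvalue
`S a j / S 0 j`. -/
lemma verlinde_sum_mul {p : ℕ} {S : Matrix (Fin (p + 1)) (Fin (p + 1)) ℂ}
    (hunit : IsUnit S)
    {N : Fin (p + 1) → Fin (p + 1) → Fin (p + 1) → ℂ}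
    (hN : ∀ i j k, N i j k = ∑ t, S j t * S i t * S⁻¹ t k / S 0 t)
    (a b j : Fin (p + 1)) :
    ∑ k, N a b k * S k j = S a j * S b j / S 0 j := by
  have hdet : IsUnit S.det := (Matrix.isUnit_iff_isUnit_det S).1 hunit
  have hinv : ∀ t, ∑ k, S⁻¹ t k * S k j = if t = j then 1 else 0 := fun t => by
    rw [← Matrix.mul_apply, Matrix.nonsing_inv_mul S hdet, Matrix.one_apply]
  calc ∑ k, N a b k * S k j
      = ∑ t, S b t * S a t / S 0 t * ∑ k, S⁻¹ t k * S k j := by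
        simp_rw [hN, Finset.sum_mul, Finset.mul_sum]
        rw [Finset.sum_comm]
        exact Finset.sum_congr rfl fun t _ => Finset.sum_congr rfl fun k _ => by ring
    _ = S a j * S b j / S 0 j := by
        simp [hinv, mul_comm (S b j)]

/-- The chain sum with `m + 1` links and an arbitrary starting label `a`; leaving `a` and `i` free
lets the induction remove links from the front. -/
lemma verlinde_chain_aux {p : ℕ} {S : Matrix (Fin (p + 1)) (Fin (p + 1)) ℂ}
    (hunit : IsUnit S)
    {N : Fin (p + 1) → Fin (p + 1) → Fin (p + 1) → ℂ}
    (hN : ∀ i j k, N i j k = ∑ t, S j t * S i t * S⁻¹ t k / S 0 t)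
    (j : Fin (p + 1)) (m : ℕ) (a : Fin (p + 1)) (i : ℕ → Fin (p + 1)) :
    ∑ l : Fin (m + 1) → Fin (p + 1),
      (fun L : ℕ → Fin (p + 1) =>
          N a (i 0) (L 0) *
            (∏ t ∈ Finset.range m, N (L t) (i (t + 1)) (L (t + 1))) *
            S (L m) j)
        (fun t => if h : t < m + 1 then l ⟨t, h⟩ else 0)
      = S a j * ∏ t ∈ Finset.range (m + 1), (S (i t) j / S 0 j) := by
  induction m generalizing a i with
  | zero =>
    rw [← (Equiv.funUnique (Fin 1) (Fin (p + 1))).symm.sum_comp]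
    simpa [mul_div_assoc] using verlinde_sum_mul hunit hN a (i 0) j
  | succ m ih =>
    rw [← (Fin.consEquiv fun _ : Fin (m + 2) => Fin (p + 1)).sum_comp, Fintype.sum_prod_type]
    -- Prepending `b` to `l` shifts the zero-extended sequence by one.
    have key : ∀ b : Fin (p + 1), ∀ l : Fin (m + 1) → Fin (p + 1),
        (fun t => if h : t < m + 1 + 1 then
          (Fin.consEquiv fun _ : Fin (m + 2) => Fin (p + 1)) (b, l) ⟨t, h⟩ else 0)
        = fun t => Nat.casesOn t b fun s => if h : s < m + 1 then l ⟨s, h⟩ else 0 := by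
      intro b l
      funext t
      cases t with
      | zero => simp [Fin.consEquiv]
      | succ s =>
        by_cases h : s < m + 1
        · simp only [Nat.add_lt_add_iff_right, h, dite_true]
          rfl
        · simp only [Nat.add_lt_add_iff_right, h, dite_false]
    calc _ = ∑ b, N a (i 0) b *
          (S b j * ∏ t ∈ Finset.range (m + 1), (S (i (t + 1)) j / S 0 j)) := by
          refine Finset.sum_congr rfl fun b _ => ?_
          rw [← ih b fun t => i (t + 1), Finset.mul_sum]
          refine Finset.sum_congr rfl fun l _ => ?_
          rw [key b l]
          simp only [Finset.prod_range_succ' _ m, Nat.rec_zero]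
          ring
      _ = _ := by
          simp_rw [← mul_assoc]
          rw [← Finset.sum_mul, verlinde_sum_mul hunit hN, Finset.prod_range_succ' _ (m + 1)]
          ring


/-- Verlinde formula consequence (Lemma 4.6 (5)): for `n ≥ 2`,
`∑_{l₁,…,l_{n−1}} N i₁ i₂ l₁ · N l₁ i₃ l₂ ⋯ N l_{n−2} iₙ l_{n−1} · S l_{n−1} j
  = (S i₁ j ⋯ S iₙ j) / (S 0 j)^(n−1)`.
Here the chain variables `l₁,…,l_{n−1}` are encoded (0-indexed) as a function
`l : Fin (n−1) → Fin (p+1)`, extended by `0` outside its range. -/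
theorem verlinde_chain_sum (p : ℕ) (S : Matrix (Fin (p + 1)) (Fin (p + 1)) ℂ)
    (hsym : ∀ i j, S i j = S j i)
    (hunit : IsUnit S)
    (h0 : ∀ t, S 0 t ≠ 0)
    (d : Fin (p + 1) → Fin (p + 1))
    (hd : ∀ i, d (d i) = i)
    (hd0 : d 0 = 0)
    (hSinv : ∀ i j, S⁻¹ i j = S i (d j))
    (N : Fin (p + 1) → Fin (p + 1) → Fin (p + 1) → ℂ)
    (hN : ∀ i j k, N i j k = ∑ t, S j t * S i t * S⁻¹ t k / S 0 t)
    (n : ℕ) (hn : 2 ≤ n) (i : ℕ → Fin (p + 1)) (j : Fin (p + 1)) :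
    ∑ l : Fin (n - 1) → Fin (p + 1),
      (fun L : ℕ → Fin (p + 1) =>
          N (i 0) (i 1) (L 0) *
            (∏ t ∈ Finset.range (n - 2), N (L t) (i (t + 2)) (L (t + 1))) *
            S (L (n - 2)) j)
        (fun t => if h : t < n - 1 then l ⟨t, h⟩ else 0)
      = (∏ t ∈ Finset.range n, S (i t) j) / (S 0 j) ^ (n - 1) := by
  obtain ⟨m, rfl⟩ := Nat.exists_eq_add_of_le' hn
  refine (verlinde_chain_aux hunit hN j m (i 0) fun t => i (t + 1)).trans ?_
  rw [Finset.prod_div_distrib, Finset.prod_range_succ' _ (m + 1)]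
  simp [mul_comm, mul_div_assoc]
end

section
/- With S, the involution i ↦ i', and the Verlinde numbers N as in the context: for every k ≥ 2 and all i₁, …, i_k ∈ I, the iterated sum ∑_{l₁,…,l_{k−2} ∈ I} N i₁ i₂ l₁ · N l₁ i₃ l₂ · ⋯ · N l_{k−3} i_{k−1} l_{k−2} · N l_{k−2} i_k 0 equals ∑_{t∈I} (S i₁ t · S i₂ t · ⋯ · S i_k t) / (S 0 t)^{k−2}. -/
/-!
Write `s_j t = S j t / S 0 t`. Since `S` is invertible, the Verlinde formula says that the fusion
matrix `(a, c) ↦ N a j c` is diagonalised by `S`: a row vector `a ↦ ∑ t, g t * S⁻¹ t a` is mapped to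
`c ↦ ∑ t, g t * s_j t * S⁻¹ t c` (`sum_mul_verlinde`). The chain sum is an entry of a product of
such matrices applied to the row vector `c ↦ N i₁ i₂ c`, which is of this form with
`g t = S i₁ t * S i₂ t / S 0 t`; so it is obtained by multiplying `g` by all the remaining
eigenvalues (`sum_chain_verlinde`). At the vacuum endpoint, `S⁻¹ t 0 = S t (d 0) = S 0 t` cancels one
factor of the denominator.
-/

/-- One fusion step multiplies the coefficients `g` in the basis of rows of `S⁻¹` by the
eigenvalues `S j t / S 0 t`. -/
lemma sum_mul_verlinde {ι : Type*} [Fintype ι] [DecidableEq ι] (o : ι)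
    (S : Matrix ι ι ℂ) (hunit : IsUnit S) (N : ι → ι → ι → ℂ)
    (hN : ∀ i j k, N i j k = ∑ t, S j t * S i t * S⁻¹ t k / S o t) (g : ι → ℂ) (j c : ι) :
    ∑ a, (∑ t, g t * S⁻¹ t a) * N a j c = ∑ t, (g t * (S j t / S o t)) * S⁻¹ t c := by
  have hinv : ∀ t u, ∑ a, S⁻¹ t a * S a u = if t = u then 1 else 0 := fun t u => by
    rw [← Matrix.mul_apply, Matrix.nonsing_inv_mul S ((Matrix.isUnit_iff_isUnit_det S).1 hunit),
      Matrix.one_apply]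
  calc ∑ a, (∑ t, g t * S⁻¹ t a) * N a j c
      = ∑ a, ∑ t, ∑ u, g t * (S j u / S o u) * S⁻¹ u c * (S⁻¹ t a * S a u) := by
        refine Finset.sum_congr rfl fun a _ => ?_
        rw [hN, Finset.sum_mul_sum]
        refine Finset.sum_congr rfl fun t _ => Finset.sum_congr rfl fun u _ => ?_
        ring
    _ = ∑ t, ∑ u, g t * (S j u / S o u) * S⁻¹ u c * ∑ a, S⁻¹ t a * S a u := by
        rw [Finset.sum_comm]
        refine Finset.sum_congr rfl fun t _ => ?_
        rw [Finset.sum_comm]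
        simp only [Finset.mul_sum]
    _ = ∑ t, (g t * (S j t / S o t)) * S⁻¹ t c := by
        simp [hinv]

/-- A chain of `n` fusion steps from a row vector with coefficients `g` to the endpoint `o`. The
induction peels off the first chain variable and absorbs it into `g`. -/
lemma sum_chain_verlinde {ι : Type*} [Fintype ι] [DecidableEq ι] (o : ι)
    (S : Matrix ι ι ℂ) (hunit : IsUnit S) (N : ι → ι → ι → ℂ)
    (hN : ∀ i j k, N i j k = ∑ t, S j t * S i t * S⁻¹ t k / S o t) (n : ℕ) :
    ∀ (g : ι → ℂ) (j : ℕ → ι),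
    ∑ l : Fin n → ι,
      (fun L : ℕ → ι =>
          (∑ t, g t * S⁻¹ t (L 0)) * ∏ t ∈ Finset.range n, N (L t) (j t) (L (t + 1)))
        (fun t => if h : t < n then l ⟨t, h⟩ else o)
      = ∑ t, g t * (∏ m ∈ Finset.range n, S (j m) t / S o t) * S⁻¹ t o := by
  induction n with
  | zero => intro g j; simp
  | succ n ih =>
    intro g j
    have key := ih (fun t => g t * (S (j 0) t / S o t)) (fun m => j (m + 1))
    rw [← (Fin.consEquiv fun _ : Fin (n + 1) => ι).sum_comp, Fintype.sum_prod_type,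
      Finset.sum_comm]
    convert key using 1
    · refine Finset.sum_congr rfl fun l _ => ?_
      beta_reduce
      rw [← sum_mul_verlinde o S hunit N hN, Finset.sum_mul]
      refine Finset.sum_congr rfl fun x _ => ?_
      have h_shift : ∀ t : ℕ, (if h : t + 1 < n + 1 then
          (Fin.consEquiv fun _ : Fin (n + 1) => ι) (x, l) ⟨t + 1, h⟩ else o)
          = if h : t < n then l ⟨t, h⟩ else o := by
        intro t
        by_cases h : t < n
        · rw [dif_pos h, dif_pos (Nat.succ_lt_succ h)]; rfl
        · rw [dif_neg h, dif_neg (by omega)]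
      have h_zero : (if h : 0 < n + 1 then
          (Fin.consEquiv fun _ : Fin (n + 1) => ι) (x, l) ⟨0, h⟩ else o) = x := by
        rw [dif_pos n.succ_pos]; rfl
      rw [Finset.prod_range_succ']
      simp only [h_shift, h_zero]
      ring
    · refine Finset.sum_congr rfl fun t _ => ?_
      rw [Finset.prod_range_succ']
      ring


/-- Verlinde formula consequence (multiplicity in `(T_g(V))^{⊠k}`): for `k ≥ 2`,
`∑_{l₁,…,l_{k−2}} N i₁ i₂ l₁ · N l₁ i₃ l₂ ⋯ N l_{k−3} i_{k−1} l_{k−2} · N l_{k−2} i_k 0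
  = ∑_t (S i₁ t ⋯ S i_k t) / (S 0 t)^(k−2)`.
Here the chain variables `l₁,…,l_{k−2}` are encoded (0-indexed) as a function
`l : Fin (k−2) → Fin (p+1)`, extended by `0` outside its range, so that the final
factor `N l_{k−2} i_k 0` is the last factor of the product. -/
theorem verlinde_chain_sum_to_vacuum (p : ℕ) (S : Matrix (Fin (p + 1)) (Fin (p + 1)) ℂ)
    (hsym : ∀ i j, S i j = S j i)
    (hunit : IsUnit S)
    (h0 : ∀ t, S 0 t ≠ 0)
    (d : Fin (p + 1) → Fin (p + 1))
    (hd : ∀ i, d (d i) = i)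
    (hd0 : d 0 = 0)
    (hSinv : ∀ i j, S⁻¹ i j = S i (d j))
    (N : Fin (p + 1) → Fin (p + 1) → Fin (p + 1) → ℂ)
    (hN : ∀ i j k, N i j k = ∑ t, S j t * S i t * S⁻¹ t k / S 0 t)
    (k : ℕ) (hk : 2 ≤ k) (i : ℕ → Fin (p + 1)) :
    ∑ l : Fin (k - 2) → Fin (p + 1),
      (fun L : ℕ → Fin (p + 1) =>
          N (i 0) (i 1) (L 0) *
            ∏ t ∈ Finset.range (k - 2), N (L t) (i (t + 2)) (L (t + 1)))
        (fun t => if h : t < k - 2 then l ⟨t, h⟩ else 0)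
      = ∑ t, (∏ m ∈ Finset.range k, S (i m) t) / (S 0 t) ^ (k - 2) := by
  obtain ⟨n, rfl⟩ := Nat.exists_eq_add_of_le' hk
  simp only [Nat.add_sub_cancel]
  have key := sum_chain_verlinde 0 S hunit N hN n (fun t => S (i 0) t * S (i 1) t / S 0 t)
    (fun m => i (m + 2))
  convert key using 1
  · refine Finset.sum_congr rfl fun l _ => ?_
    beta_reduce
    rw [hN]
    congr 1
    refine Finset.sum_congr rfl fun t _ => ?_
    ring
  · refine Finset.sum_congr rfl fun t _ => ?_
    rw [hSinv, hd0, hsym t 0, Finset.prod_div_distrib, Finset.prod_const, Finset.card_range,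
      Finset.prod_range_succ', Finset.prod_range_succ']
    have := h0 t
    field_simp
end
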